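/- For all integers n ≥ 1 and 0 ≤ t ≤ n, and any element x of a commutative ℚ-algebra: ∑_{m=0}^{t} C(n, m) · (n-m)! · ((-1)^{t-m}/(t-m)!) · (x-n+1)(x-n+2)···(x-n+m) · (2n-t)(2n-t-1)···(n+m-t+1) = n! · (2n-t)(2n-t-1)···(n+1) · (-1)^t · C(-x+2n-1, t), where C(y, t) denotes the generalized binomial coefficient y(y-1)···(y-t+1)/t!. -/

import Mathlib

/-- The generalized binomial coefficient `C(x, r) = x(x-1)⋯(x-r+1)/r!` of an element `x`
of a commutative ℚ-algebra. -/
noncomputable def gbinom {A : Type*} [CommRing A] [Algebra ℚ A] (x : A) (r : ℕ) : A :=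
  ((r.factorial : ℚ)⁻¹) • ∏ j ∈ Finset.range r, (x - j)

theorem dp_prod {A : Type*} [CommRing A] (r : A) (k : ℕ) :
    (descPochhammer ℤ k).smeval r = ∏ j ∈ Finset.range k, (r - j) := by
  induction k with
  | zero => simp
  | succ k ih =>
    rw [Finset.prod_range_succ, ← ih, descPochhammer_succ_right, Polynomial.smeval_mul]
    congr 1
    simp [Polynomial.smeval_sub, Polynomial.smeval_X, Polynomial.smeval_natCast]

theorem prod_desc {A : Type*} [CommRing A] (n k : ℕ) :
    ∏ j ∈ Finset.range k, ((n : A) - j) = (n.descFactorial k : A) := by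
  rw [← descPochhammer_eval_eq_descFactorial, descPochhammer_eval_eq_prod_range]

theorem vander {A : Type*} [CommRing A] (r s : A) (t : ℕ) :
    ∏ j ∈ Finset.range t, (r + s - j) = ∑ m ∈ Finset.range (t + 1),
      (t.choose m : A) * ((∏ j ∈ Finset.range m, (r - j)) *
        ∏ j ∈ Finset.range (t - m), (s - j)) := by
  have h := Ring.descPochhammer_smeval_add t (Commute.all r s)
  rw [Finset.Nat.sum_antidiagonal_eq_sum_range_succ_mk] at h
  simpa [dp_prod] using h

theorem coeff (n t m : ℕ) (ht : t ≤ n) (hm : m ≤ t) :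
    ((-1 : ℚ) ^ (t - m) * ((Nat.factorial (t - m) : ℚ))⁻¹) *
      ((n.choose m : ℚ) * ((n - m).factorial : ℚ) * ((2 * n - t).descFactorial (n - m) : ℚ)) =
    (n.factorial : ℚ) * ((2 * n - t).descFactorial (n - t) : ℚ) * (-1) ^ t *
      (t.factorial : ℚ)⁻¹ * ((t.choose m : ℚ) * (-1) ^ m * (n.descFactorial (t - m) : ℚ)) := by
  obtain ⟨k, rfl⟩ := Nat.exists_eq_add_of_le hm
  obtain ⟨l, rfl⟩ := Nat.exists_eq_add_of_le ht
  have e1 : 2 * (m + k + l) - (m + k) = m + k + l + l := by omega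
  have e2 : m + k + l - m = k + l := by omega
  have e3 : m + k + l - (m + k) = l := by omega
  have e4 : m + k - m = k := by omega
  rw [e1, e2, e3, e4]
  have h1 := Nat.choose_mul_factorial_mul_factorial (n := m + k + l) (k := m) (by omega)
  have h2 := Nat.choose_mul_factorial_mul_factorial (n := m + k) (k := m) (by omega)
  have h3 := Nat.factorial_mul_descFactorial (n := m + k + l + l) (k := k + l) (by omega)
  have h4 := Nat.factorial_mul_descFactorial (n := m + k + l + l) (k := l) (by omega)
  have h5 := Nat.factorial_mul_descFactorial (n := m + k + l) (k := k) (by omega)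
  rw [e2] at h1
  rw [e4] at h2
  rw [show m + k + l + l - (k + l) = m + l by omega] at h3
  rw [show m + k + l + l - l = m + k + l by omega] at h4
  rw [show m + k + l - k = m + l by omega] at h5
  have f := fun i : ℕ => (Nat.cast_ne_zero (R := ℚ)).2 (Nat.factorial_ne_zero i)
  have g1 : ((m + k + l).choose m : ℚ) * ((k + l).factorial : ℚ)
      = (m + k + l).factorial / m.factorial := by
    rw [eq_div_iff (f m), ← h1]; push_cast; ring
  have g2 : ((m + k).choose m : ℚ) = (m + k).factorial / (m.factorial * k.factorial) := by
    rw [eq_div_iff (mul_ne_zero (f m) (f k)), ← h2]; push_cast; ring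
  have g3 : ((m + k + l + l).descFactorial (k + l) : ℚ)
      = (m + k + l + l).factorial / (m + l).factorial := by
    rw [eq_div_iff (f _), ← h3]; push_cast; ring
  have g4 : ((m + k + l + l).descFactorial l : ℚ)
      = (m + k + l + l).factorial / (m + k + l).factorial := by
    rw [eq_div_iff (f _), ← h4]; push_cast; ring
  have g5 : ((m + k + l).descFactorial k : ℚ)
      = (m + k + l).factorial / (m + l).factorial := by
    rw [eq_div_iff (f _), ← h5]; push_cast; ring
  rw [g1, g2, g3, g4, g5]
  have s : (-1 : ℚ) ^ (m + k) * (-1) ^ m = (-1) ^ k := by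
    rw [pow_add, mul_right_comm, ← mul_pow]; simp
  rw [← s]
  have := f m
  have := f k
  have := f (m + l)
  have := f (m + k)
  have := f (m + k + l)
  field_simp

/-- `∑_{m=0}^{t} C(n,m)(n-m)! ((-1)^{t-m}/(t-m)!) (x-n+1)⋯(x-n+m) (2n-t)⋯(n+m-t+1)
  = n! (2n-t)⋯(n+1) (-1)^t C(-x+2n-1, t)`. -/
theorem stmt14 {A : Type*} [CommRing A] [Algebra ℚ A] (n t : ℕ)
    (hn : 1 ≤ n) (ht : t ≤ n) (x : A) :
    ∑ m ∈ Finset.range (t + 1),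
        ((-1 : ℚ) ^ (t - m) * ((Nat.factorial (t - m) : ℚ))⁻¹) •
          ((Nat.choose n m : A) * (Nat.factorial (n - m) : A) *
            (∏ j ∈ Finset.range m, (x - (n : A) + ((j + 1 : ℕ) : A))) *
            (Nat.descFactorial (2 * n - t) (n - m) : A)) =
      (Nat.factorial n : A) * (Nat.descFactorial (2 * n - t) (n - t) : A) * (-1 : A) ^ t *
        gbinom (-x + ((2 * n - 1 : ℕ) : A)) t := by
  have hx : -x + ((2 * n - 1 : ℕ) : A) = -(x - n + 1) + (n : A) := by
    rw [Nat.cast_sub (by omega)]; push_cast; ring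
  unfold gbinom
  rw [hx, vander, Finset.smul_sum, Finset.mul_sum]
  refine Finset.sum_congr rfl fun m hm => ?_
  have hm : m ≤ t := by simpa [Nat.lt_succ_iff] using hm
  rw [prod_desc]
  have hp : ∏ j ∈ Finset.range m, (-(x - (n : A) + 1) - j)
      = (-1) ^ m * ∏ j ∈ Finset.range m, (x - (n : A) + ((j + 1 : ℕ) : A)) := by
    rw [← Finset.card_range m, ← Finset.prod_const, Finset.card_range, ← Finset.prod_mul_distrib]
    refine Finset.prod_congr rfl fun j _ => ?_
    push_cast; ring
  rw [hp]
  generalize ∏ j ∈ Finset.range m, (x - (n : A) + ((j + 1 : ℕ) : A)) = P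
  have h := congrArg (algebraMap ℚ A) (coeff n t m ht hm)
  rw [Algebra.smul_def, Algebra.smul_def]
  simp only [map_mul, map_pow, map_neg, map_one, map_natCast] at h ⊢
  linear_combination P * h
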